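/- arXiv:2108.12312 — 3 statements merged into one kernel-verified Lean document; each statement's English description precedes it below -/
import Mathlib

section
/- Let p ∈ R be an idempotent and let a, b ∈ R satisfy p*a = a, a*p = 0, b*p = b, p*b = 0. Set m = a + b. Then m is group invertible if and only if a*b and b*a are group invertible and (a*b)^π * a = 0 and b * (a*b)^π = 0; in this case m^# = (a*b)^# * a + b * (a*b)^# = a * (b*a)^# + (b*a)^# * b. -/
variable {R : Type*} [Ring R]

/-- `c` is a group inverse of `a`. -/
def IsGroupInvOf (a c : R) : Prop := a * c * a = a ∧ c * a * c = c ∧ a * c = c * a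

/-- `a` is group invertible. -/
def GroupInvertible (a : R) : Prop := ∃ c, IsGroupInvOf a c

/-- The group inverse `a^#` (junk value `0` if it does not exist). -/
noncomputable def gi (a : R) : R :=
  haveI := Classical.dec (GroupInvertible a)
  if h : GroupInvertible a then h.choose else 0

/-- The spectral idempotent `a^π = 1 - a * a^#`. -/
noncomputable def sp (a : R) : R := 1 - a * gi a

/-!
View `m = a + b` as the matrix `[[0, a], [b, 0]]`. The element `p` commutes with `m²`, hence with
its group inverse `(m^#)²`, so `m^# = m (m^#)²` is again antidiagonal, say `[[0, x], [y, 0]]`.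
Comparing entries in the equations defining a group inverse gives `(ab)^# = xy`, `(ba)^# = yx`,
`x = xya` and `y = bxy`. Conversely, `x = (ab)^# a` and `y = b (ab)^#` satisfy the entrywise
equations as soon as the spectral idempotent of `ab` annihilates `a` and `b`.
-/

namespace IsGroupInvOf

variable {a c : R}

theorem commute (h : IsGroupInvOf a c) : Commute a c := h.2.2

theorem eq_mul_sq (h : IsGroupInvOf a c) : c = a * c ^ 2 := by
  rw [sq, ← mul_assoc, h.commute.eq, h.2.1]

theorem eq_sq_mul (h : IsGroupInvOf a c) : c = c ^ 2 * a := by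
  rw [sq, mul_assoc, ← h.commute.eq, ← mul_assoc, h.2.1]

theorem commute_of_commute {z : R} (h : IsGroupInvOf a c) (hz : Commute a z) : Commute c z := by
  have eq_mul_mul : a = a * (a * c) := by rw [h.2.2, ← mul_assoc, h.1]
  have eq_mul_mul' : a = c * a * a := by rw [← h.2.2, h.1]
  have mul_eq : c * z = c ^ 2 * z * a := by
    rw [mul_assoc, ← hz.eq, ← mul_assoc, ← h.eq_sq_mul]
  have mul_eq' : z * c = a * z * c ^ 2 := by
    rw [hz.eq, mul_assoc, ← h.eq_mul_sq]
  calc c * z = c ^ 2 * z * (a * (a * c)) := by rw [← eq_mul_mul, mul_eq]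
    _ = c * z * (a * c) := by rw [← mul_assoc, ← mul_eq]
    _ = c * a * (z * c) := by rw [← mul_assoc, mul_assoc c z, ← hz.eq]; simp only [mul_assoc]
    _ = c * a * a * z * c ^ 2 := by rw [mul_eq']; simp only [mul_assoc]
    _ = z * c := by rw [← eq_mul_mul', mul_eq']

theorem unique {c' : R} (h : IsGroupInvOf a c) (h' : IsGroupInvOf a c') : c = c' := by
  have hcc' : Commute c' c := h'.commute_of_commute h.commute
  have mul_eq : a * c = a * c' := by
    calc a * c = a * c' * (a * c) := by rw [← mul_assoc, h'.1]
      _ = a * c * (a * c') :=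
        ((Commute.refl a).mul_right h.commute).mul_left (h'.commute.symm.mul_right hcc')
      _ = a * c' := by rw [← mul_assoc, h.1]
  calc c = c * (a * c') := by rw [← mul_eq, ← mul_assoc, h.2.1]
    _ = a * c * c' := by rw [← mul_assoc, h.2.2]
    _ = c' := by rw [mul_eq, h'.2.2, h'.2.1]

theorem gi_eq (h : IsGroupInvOf a c) : gi a = c := by
  have ha : GroupInvertible a := ⟨c, h⟩
  rw [gi, dif_pos ha]
  exact ha.choose_spec.unique h

theorem pow (h : IsGroupInvOf a c) (n : ℕ) : IsGroupInvOf (a ^ n) (c ^ n) := by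
  have hac := h.commute
  refine ⟨?_, ?_, hac.pow_pow n n⟩
  · rw [← hac.mul_pow, ← ((Commute.refl a).mul_left hac.symm).mul_pow, h.1]
  · rw [← hac.symm.mul_pow, ← ((Commute.refl c).mul_left hac).mul_pow, h.2.1]

end IsGroupInvOf

theorem GroupInvertible.isGroupInvOf_gi {a : R} (h : GroupInvertible a) :
    IsGroupInvOf a (gi a) := by
  obtain ⟨c, hc⟩ := h
  rwa [hc.gi_eq]

theorem sp_mul_eq_zero_iff {u v : R} : sp u * v = 0 ↔ u * gi u * v = v := by
  rw [sp, sub_mul, one_mul, sub_eq_zero, eq_comm]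

theorem mul_sp_eq_zero_iff {u v : R} : v * sp u = 0 ↔ v * (u * gi u) = v := by
  rw [sp, mul_sub, mul_one, sub_eq_zero, eq_comm]

/-- The entrywise form of the statement that `[[0, x], [y, 0]]` is a group inverse of
`[[0, a], [b, 0]]`. -/
structure IsGroupInvPair (a b x y : R) : Prop where
  upper_mul_mul : a * y * a = a
  lower_mul_mul : b * x * b = b
  inv_upper_mul_mul : x * b * x = x
  inv_lower_mul_mul : y * a * y = y
  upper_comm : a * y = x * b
  lower_comm : b * x = y * a

namespace IsGroupInvPair

variable {a b x y : R}

theorem swap (h : IsGroupInvPair a b x y) : IsGroupInvPair b a y x where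
  upper_mul_mul := h.lower_mul_mul
  lower_mul_mul := h.upper_mul_mul
  inv_upper_mul_mul := h.inv_lower_mul_mul
  inv_lower_mul_mul := h.inv_upper_mul_mul
  upper_comm := h.lower_comm
  lower_comm := h.upper_comm

theorem mul_mul_inv_eq (h : IsGroupInvPair a b x y) : a * b * (x * y) = a * y := by
  rw [← mul_assoc, mul_assoc a b x, h.lower_comm, ← mul_assoc, h.upper_mul_mul]

theorem inv_mul_mul_eq (h : IsGroupInvPair a b x y) : x * y * (a * b) = a * y := by
  rw [← mul_assoc, mul_assoc x y a, ← h.lower_comm, ← mul_assoc, h.inv_upper_mul_mul, h.upper_comm]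

theorem isGroupInvOf_mul (h : IsGroupInvPair a b x y) : IsGroupInvOf (a * b) (x * y) := by
  refine ⟨?_, ?_, h.mul_mul_inv_eq.trans h.inv_mul_mul_eq.symm⟩
  · rw [h.mul_mul_inv_eq, ← mul_assoc, h.upper_mul_mul]
  · rw [h.inv_mul_mul_eq, h.upper_comm, ← mul_assoc, h.inv_upper_mul_mul]

theorem upper_eq (h : IsGroupInvPair a b x y) : x = gi (a * b) * a := by
  rw [h.isGroupInvOf_mul.gi_eq, mul_assoc, ← h.lower_comm, ← mul_assoc, h.inv_upper_mul_mul]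

theorem lower_eq (h : IsGroupInvPair a b x y) : y = b * gi (a * b) := by
  rw [h.isGroupInvOf_mul.gi_eq, ← mul_assoc, h.lower_comm, h.inv_lower_mul_mul]

theorem sp_mul_upper (h : IsGroupInvPair a b x y) : sp (a * b) * a = 0 := by
  rw [sp_mul_eq_zero_iff, h.isGroupInvOf_mul.gi_eq, h.mul_mul_inv_eq, h.upper_mul_mul]

theorem lower_mul_sp (h : IsGroupInvPair a b x y) : b * sp (a * b) = 0 := by
  rw [mul_sp_eq_zero_iff, h.isGroupInvOf_mul.gi_eq, h.mul_mul_inv_eq, h.upper_comm, ← mul_assoc,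
    h.lower_mul_mul]

theorem of_isGroupInvOf_mul {d : R} (hd : IsGroupInvOf (a * b) d) (ha : a * b * d * a = a)
    (hb : b * (a * b * d) = b) : IsGroupInvPair a b (d * a) (b * d) where
  upper_mul_mul := by rw [← mul_assoc, ha]
  lower_mul_mul := by rw [mul_assoc, mul_assoc d, ← hd.2.2, hb]
  inv_upper_mul_mul := by rw [mul_assoc d, ← mul_assoc, hd.2.1]
  inv_lower_mul_mul := by
    rw [mul_assoc b, mul_assoc b, mul_assoc d, ← mul_assoc a, ← mul_assoc d, hd.2.1]
  upper_comm := by rw [← mul_assoc, hd.2.2, mul_assoc]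
  lower_comm := (mul_assoc b d a).symm

end IsGroupInvPair

/-- For an idempotent `p`, the element `a + b` is antidiagonal in the Peirce decomposition relative
to `p`, with upper right entry `a ∈ pR(1 - p)` and lower left entry `b ∈ (1 - p)Rp`. The equations
make sense for an arbitrary element `p`. -/
structure IsAntidiagonal (p a b : R) : Prop where
  mul_upper : p * a = a
  upper_mul : a * p = 0
  lower_mul : b * p = b
  mul_lower : p * b = 0

namespace IsAntidiagonal

variable {p a b x y : R}

theorem swap (h : IsAntidiagonal p a b) : IsAntidiagonal (1 - p) b a where
  mul_upper := by rw [sub_mul, one_mul, h.mul_lower, sub_zero]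
  upper_mul := by rw [mul_sub, mul_one, h.lower_mul, sub_self]
  lower_mul := by rw [mul_sub, mul_one, h.upper_mul, sub_zero]
  mul_lower := by rw [sub_mul, one_mul, h.mul_upper, sub_self]

theorem mul_add_eq_upper (h : IsAntidiagonal p a b) : p * (a + b) = a := by
  rw [mul_add, h.mul_upper, h.mul_lower, add_zero]

theorem add_inj (h : IsAntidiagonal p a b) (k : IsAntidiagonal p x y) :
    a + b = x + y ↔ a = x ∧ b = y := by
  refine ⟨fun e => ?_, fun ⟨ha, hb⟩ => by rw [ha, hb]⟩
  have ha : a = x := by rw [← h.mul_add_eq_upper, e, k.mul_add_eq_upper]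
  exact ⟨ha, by rwa [ha, add_right_inj] at e⟩

theorem upper_mul_upper (h : IsAntidiagonal p a b) (k : IsAntidiagonal p x y) : a * x = 0 := by
  rw [← k.mul_upper, ← mul_assoc, h.upper_mul, zero_mul]

theorem add_mul_add (h : IsAntidiagonal p a b) (k : IsAntidiagonal p x y) :
    (a + b) * (x + y) = a * y + b * x := by
  rw [add_mul, mul_add, mul_add, h.upper_mul_upper k, h.swap.upper_mul_upper k.swap,
    zero_add, add_zero]

theorem add_mul_add_mul_add {u v : R} (h : IsAntidiagonal p a b) (k : IsAntidiagonal p x y)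
    (l : IsAntidiagonal p u v) : (a + b) * (x + y) * (u + v) = a * y * u + b * x * v := by
  rw [h.add_mul_add k, add_mul, mul_add, mul_add, mul_assoc a y v,
    mul_assoc b x u, k.swap.upper_mul_upper l.swap, k.upper_mul_upper l, mul_zero, mul_zero,
    add_zero, zero_add]

theorem mul_diagonal (h : IsAntidiagonal p a b) : p * (a * y + b * x) = a * y := by
  rw [mul_add, ← mul_assoc, ← mul_assoc, h.mul_upper, h.mul_lower, zero_mul, add_zero]

theorem diagonal_mul (h : IsAntidiagonal p a b) : (x * b + y * a) * p = x * b := by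
  rw [add_mul, mul_assoc, mul_assoc, h.lower_mul, h.upper_mul, mul_zero, add_zero]

theorem mul_mul {u v : R} (h : IsAntidiagonal p a b) (l : IsAntidiagonal p u v) :
    IsAntidiagonal p (a * y * u) (b * x * v) where
  mul_upper := by rw [← mul_assoc, ← mul_assoc, h.mul_upper]
  upper_mul := by rw [mul_assoc, l.upper_mul, mul_zero]
  lower_mul := by rw [mul_assoc, l.lower_mul]
  mul_lower := by rw [← mul_assoc, ← mul_assoc, h.mul_lower, zero_mul, zero_mul]

theorem mul_right_of_commute {e : R} (h : IsAntidiagonal p a b) (he : Commute p e) :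
    IsAntidiagonal p (a * e) (b * e) where
  mul_upper := by rw [← mul_assoc, h.mul_upper]
  upper_mul := by rw [mul_assoc, ← he.eq, ← mul_assoc, h.upper_mul, zero_mul]
  lower_mul := by rw [mul_assoc, ← he.eq, ← mul_assoc, h.lower_mul]
  mul_lower := by rw [← mul_assoc, h.mul_lower, zero_mul]

theorem commute_add_iff (h : IsAntidiagonal p a b) (k : IsAntidiagonal p x y) :
    Commute (a + b) (x + y) ↔ a * y = x * b ∧ b * x = y * a := by
  rw [commute_iff_eq, h.add_mul_add k, k.add_mul_add h]
  refine ⟨fun e => ?_, fun ⟨hu, hl⟩ => by rw [hu, hl]⟩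
  have hu : a * y = x * b := by rw [← h.mul_diagonal, e, k.mul_diagonal]
  exact ⟨hu, by rwa [hu, add_right_inj] at e⟩

theorem isGroupInvOf_add_iff (h : IsAntidiagonal p a b) (k : IsAntidiagonal p x y) :
    IsGroupInvOf (a + b) (x + y) ↔ IsGroupInvPair a b x y := by
  rw [IsGroupInvOf, ← commute_iff_eq, h.add_mul_add_mul_add k h, k.add_mul_add_mul_add h k,
    (h.mul_mul h).add_inj h, (k.mul_mul k).add_inj k, h.commute_add_iff k]
  exact ⟨fun ⟨⟨ha, hb⟩, ⟨hx, hy⟩, hu, hl⟩ => ⟨ha, hb, hx, hy, hu, hl⟩,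
    fun ⟨ha, hb, hx, hy, hu, hl⟩ => ⟨⟨ha, hb⟩, ⟨hx, hy⟩, hu, hl⟩⟩

theorem commute_sq_add (h : IsAntidiagonal p a b) : Commute p ((a + b) ^ 2) := by
  rw [sq, h.add_mul_add h, commute_iff_eq, h.mul_diagonal, h.diagonal_mul]

theorem exists_isGroupInvPair {c : R} (h : IsAntidiagonal p a b) (hc : IsGroupInvOf (a + b) c) :
    ∃ x y, IsGroupInvPair a b x y ∧ c = x + y := by
  have hpc : Commute p (c ^ 2) := ((hc.pow 2).commute_of_commute h.commute_sq_add.symm).symm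
  have hc_eq : c = a * c ^ 2 + b * c ^ 2 := by rw [← add_mul, ← hc.eq_mul_sq]
  refine ⟨a * c ^ 2, b * c ^ 2, ?_, hc_eq⟩
  rwa [← h.isGroupInvOf_add_iff (h.mul_right_of_commute hpc), ← hc_eq]

theorem inv_mul_mul_inv {d : R} (h : IsAntidiagonal p a b) (hd : IsGroupInvOf (a * b) d) :
    IsAntidiagonal p (d * a) (b * d) where
  mul_upper := by rw [hd.eq_mul_sq, ← mul_assoc, ← mul_assoc, ← mul_assoc, h.mul_upper]
  upper_mul := by rw [mul_assoc, h.upper_mul, mul_zero]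
  lower_mul := by rw [hd.eq_sq_mul, mul_assoc, mul_assoc, mul_assoc, h.lower_mul]
  mul_lower := by rw [← mul_assoc, h.mul_lower, zero_mul]

end IsAntidiagonal

theorem antidiagonal_group_invertible_general {p a b : R} (h : IsAntidiagonal p a b) :
    (GroupInvertible (a + b) ↔
      GroupInvertible (a * b) ∧ GroupInvertible (b * a) ∧
        sp (a * b) * a = 0 ∧ b * sp (a * b) = 0) ∧
    (GroupInvertible (a + b) →
      gi (a + b) = gi (a * b) * a + b * gi (a * b) ∧
      gi (a + b) = a * gi (b * a) + gi (b * a) * b) := by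
  refine ⟨⟨?_, ?_⟩, ?_⟩
  · rintro ⟨c, hc⟩
    obtain ⟨x, y, hxy, -⟩ := h.exists_isGroupInvPair hc
    exact ⟨⟨_, hxy.isGroupInvOf_mul⟩, ⟨_, hxy.swap.isGroupInvOf_mul⟩, hxy.sp_mul_upper,
      hxy.lower_mul_sp⟩
  · rintro ⟨hab, -, ha, hb⟩
    have hd := hab.isGroupInvOf_gi
    exact ⟨_, (h.isGroupInvOf_add_iff (h.inv_mul_mul_inv hd)).2 <|
      .of_isGroupInvOf_mul hd (sp_mul_eq_zero_iff.1 ha) (mul_sp_eq_zero_iff.1 hb)⟩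
  · rintro ⟨c, hc⟩
    obtain ⟨x, y, hxy, rfl⟩ := h.exists_isGroupInvPair hc
    rw [hc.gi_eq, ← hxy.upper_eq, ← hxy.lower_eq, ← hxy.swap.upper_eq, ← hxy.swap.lower_eq]
    exact ⟨rfl, rfl⟩

theorem antidiagonal_group_invertible (p a b : R) (hp : p * p = p)
    (hpa : p * a = a) (hap : a * p = 0) (hbp : b * p = b) (hpb : p * b = 0) :
    (GroupInvertible (a + b) ↔
      GroupInvertible (a * b) ∧ GroupInvertible (b * a) ∧
        sp (a * b) * a = 0 ∧ b * sp (a * b) = 0) ∧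
    (GroupInvertible (a + b) →
      gi (a + b) = gi (a * b) * a + b * gi (a * b) ∧
      gi (a + b) = a * gi (b * a) + gi (b * a) * b) :=
  antidiagonal_group_invertible_general ⟨hpa, hap, hbp, hpb⟩
end

section
/- Let p, q ∈ R be idempotents. Then (1-p)*q is group invertible if and only if q4 is group invertible and q4^π * q3 = 0. -/
/-!
With `e = 1 - p` and `a = e * q` we have `e * a = a`, so relative to `e` the element `a` is block
triangular, with diagonal block `q4 = a * e` and off-diagonal block `q3 = a * p`. Since the spectral
idempotent of `q4` kills `q4`, it kills `q3` if and only if it kills `a = q3 + q4`, i.e. if and only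
if `q4 * q4^# * a = a`.

If `c = a^#`, then `c * e` is a group inverse of `q4`, and `a = a * a * c = q4 * (a * c)`, so
everything killing `q4` from the left kills `a`. Conversely, if `d = q4^#` and `q4 * d * a = a`,
then `d * d * a` is a group inverse of `a`.
-/

variable {R : Type*} [Ring R]

namespace GroupInvertible

variable {a : R}

theorem isGroupInvOf_gi_s9 (h : GroupInvertible a) : IsGroupInvOf a (gi a) := by
  rw [gi, dif_pos h]
  exact h.choose_spec

theorem sp_mul_self (h : GroupInvertible a) : sp a * a = 0 := by
  rw [sp, sub_mul, one_mul, h.isGroupInvOf_gi_s9.1, sub_self]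

end GroupInvertible

namespace IsGroupInvOf

variable {a c d e : R}

theorem left_mul_eq_self (h : IsGroupInvOf a c) (hea : e * a = a) : e * c = c := by
  obtain ⟨-, hcac, hcomm⟩ := h
  have hacc : a * c * c = c := by rw [hcomm, hcac]
  calc e * c = e * a * c * c := by rw [mul_assoc e, mul_assoc e, hacc]
    _ = c := by rw [hea, hacc]

theorem mul_right (h : IsGroupInvOf a c) (hea : e * a = a) : IsGroupInvOf (a * e) (c * e) := by
  have hec : e * c = c := h.left_mul_eq_self hea
  obtain ⟨haca, hcac, hcomm⟩ := h
  have hac : a * e * (c * e) = a * c * e := by rw [mul_assoc a, ← mul_assoc e, hec, mul_assoc]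
  have hca : c * e * (a * e) = c * a * e := by rw [mul_assoc c, ← mul_assoc e, hea, mul_assoc]
  refine ⟨?_, ?_, ?_⟩
  · rw [hac, mul_assoc, ← mul_assoc e, hea, ← mul_assoc, haca]
  · rw [hca, mul_assoc, ← mul_assoc e, hec, ← mul_assoc, hcac]
  · rw [hac, hca, hcomm]

theorem of_mul_right (h : IsGroupInvOf (a * e) d) (hea : e * a = a) (hda : a * e * d * a = a) :
    IsGroupInvOf a (d * d * a) := by
  have hed : e * d = d := h.left_mul_eq_self (by rw [← mul_assoc, hea])
  obtain ⟨-, hdad, hcomm⟩ := h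
  have hadd : a * d * d = d := by
    calc a * d * d = a * e * d * d := by rw [mul_assoc a e, hed]
      _ = d := by rw [hcomm, hdad]
  have hdaa : d * a * a = a := by
    calc d * a * a = d * (a * e) * a := by rw [mul_assoc, mul_assoc d, mul_assoc a e, hea]
      _ = a := by rw [← hcomm, hda]
  have hleft : a * (d * d * a) = d * a := by rw [← mul_assoc, ← mul_assoc, hadd]
  have hright : d * d * a * a = d * a := by rw [mul_assoc d d, mul_assoc d, hdaa]
  refine ⟨?_, ?_, ?_⟩
  · rw [hleft, hdaa]
  · rw [hright, mul_assoc, hleft, mul_assoc]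
  · rw [hleft, hright]

end IsGroupInvOf

theorem groupInvertible_iff_mul_right {a e : R} (hea : e * a = a) :
    GroupInvertible a ↔ GroupInvertible (a * e) ∧ sp (a * e) * a = 0 := by
  constructor
  · rintro ⟨c, hc⟩
    have hae : GroupInvertible (a * e) := ⟨c * e, hc.mul_right hea⟩
    have hfactor : a * e * (a * c) = a := by
      calc a * e * (a * c) = a * (a * c) := by rw [mul_assoc, ← mul_assoc e, hea]
        _ = a := by rw [hc.2.2, ← mul_assoc, hc.1]
    refine ⟨hae, ?_⟩
    calc sp (a * e) * a = sp (a * e) * (a * e) * (a * c) := by rw [mul_assoc, hfactor]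
      _ = 0 := by rw [hae.sp_mul_self, zero_mul]
  · rintro ⟨hae, hsp⟩
    have hfix : a * e * gi (a * e) * a = a := by
      rw [sp, sub_mul, one_mul, sub_eq_zero] at hsp
      exact hsp.symm
    exact ⟨_, hae.isGroupInvOf_gi_s9.of_mul_right hea hfix⟩

theorem group_inv_pbar_q_general {p a : R} (hpa : p * a = 0) :
    GroupInvertible a ↔ GroupInvertible (a * (1 - p)) ∧ sp (a * (1 - p)) * (a * p) = 0 := by
  have hea : (1 - p) * a = a := by rw [sub_mul, one_mul, hpa, sub_zero]
  have hap : a * p = a - a * (1 - p) := by rw [mul_sub, mul_one, sub_sub_cancel]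
  rw [groupInvertible_iff_mul_right hea]
  refine and_congr_right fun hae => ?_
  rw [hap, mul_sub (sp _), hae.sp_mul_self, sub_zero]

theorem group_inv_pbar_q (p q q1 q2 q3 q4 : R) (hp : p * p = p) (hq : q * q = q)
    (h1 : q1 = p * q * p) (h2 : q2 = p * q * (1 - p))
    (h3 : q3 = (1 - p) * q * p) (h4 : q4 = (1 - p) * q * (1 - p)) :
    GroupInvertible ((1 - p) * q) ↔ GroupInvertible q4 ∧ sp q4 * q3 = 0 := by
  subst h3 h4
  exact group_inv_pbar_q_general <| by
    rw [← mul_assoc, IsIdempotentElem.mul_one_sub_self hp, zero_mul]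
end

section
/- Let p, q ∈ R be idempotents such that p - q is invertible in R, and set f = p*(p-q)⁻¹ and g = (p-q)⁻¹*p. Then f and g are idempotents with f*R = p*R, f° = q*R, g*R = q° and g° = p°; moreover (1-p)*f = 0 and g*(1-p) = 0. -/
/-!
With `d = p - q` and `u = d⁻¹`, conjugation by `d` exchanges `p` and `1 - q`, hence so does
conjugation by `u`: `f = p * u = u * (1 - q)` and `g = u * p = (1 - q) * u`. A unit on the right
does not change the right ideal generated by an element, and a unit on the left does not change its
right annihilator, so both can be read off the idempotents `p` and `1 - q`. Moreover
`p * u * p = p`, which makes `f` and `g` idempotent.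
-/

variable {R : Type*} [Ring R]

/-- The right multiples `x*R`. -/
def rMul (x : R) : Set R := {z | ∃ y, z = x * y}

/-- The right annihilator `x°`. -/
def rAnn (x : R) : Set R := {y | x * y = 0}

section RightIdeals

variable {a e u v : R}

theorem rMul_mul_of_mul_eq_one (huv : u * v = 1) : rMul (a * u) = rMul a := by
  ext z
  constructor
  · rintro ⟨y, rfl⟩
    exact ⟨u * y, mul_assoc a u y⟩
  · rintro ⟨y, rfl⟩
    exact ⟨v * y, by rw [mul_assoc, ← mul_assoc u, huv, one_mul]⟩

theorem rAnn_mul_of_isLeftRegular (hu : IsLeftRegular u) : rAnn (u * a) = rAnn a := by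
  ext y
  change u * a * y = 0 ↔ a * y = 0
  rw [mul_assoc, hu.mul_left_eq_zero_iff]

theorem rAnn_one_sub_of_isIdempotentElem (he : IsIdempotentElem e) : rAnn (1 - e) = rMul e := by
  ext y
  constructor
  · intro (hy : (1 - e) * y = 0)
    rw [sub_mul, one_mul, sub_eq_zero] at hy
    exact ⟨y, hy⟩
  · rintro ⟨z, rfl⟩
    change (1 - e) * (e * z) = 0
    rw [← mul_assoc, he.one_sub_mul_self, zero_mul]

theorem rMul_one_sub_of_isIdempotentElem (he : IsIdempotentElem e) : rMul (1 - e) = rAnn e := by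
  rw [← rAnn_one_sub_of_isIdempotentElem he.one_sub, sub_sub_cancel]

end RightIdeals

section InnerInverse

variable {S : Type*} [Semigroup S] {a b : S}

theorem isIdempotentElem_mul_right_of_mul_mul_eq_self (h : a * b * a = a) :
    IsIdempotentElem (a * b) := by
  rw [IsIdempotentElem, ← mul_assoc, h]

theorem isIdempotentElem_mul_left_of_mul_mul_eq_self (h : a * b * a = a) :
    IsIdempotentElem (b * a) := by
  rw [IsIdempotentElem, mul_assoc, ← mul_assoc a, h]

end InnerInverse

theorem semiconjBy_symm_of_mul_eq_one {M : Type*} [Monoid M] {d u x y : M}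
    (hdu : d * u = 1) (hud : u * d = 1) (h : SemiconjBy d x y) : SemiconjBy u y x :=
  SemiconjBy.units_inv_symm_left (a := ⟨d, u, hdu, hud⟩) h

section DifferenceOfIdempotents

variable {A : Type*} [NonAssocRing A] {p q : A}

theorem semiconjBy_sub_self_one_sub (hp : IsIdempotentElem p) (hq : IsIdempotentElem q) :
    SemiconjBy (p - q) p (1 - q) := by
  simp only [SemiconjBy, mul_sub, sub_mul, one_mul, hp.eq, hq.eq]
  abel

theorem semiconjBy_sub_one_sub_self (hp : IsIdempotentElem p) (hq : IsIdempotentElem q) :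
    SemiconjBy (p - q) (1 - q) p := by
  simp only [SemiconjBy, mul_sub, sub_mul, mul_one, hp.eq, hq.eq]
  abel

end DifferenceOfIdempotents

theorem mul_mul_eq_self_of_sub_mul_eq_one {p q u : R} (hp : IsIdempotentElem p)
    (hdu : (p - q) * u = 1) (hup : u * p = (1 - q) * u) : p * u * p = p :=
  calc
    p * u * p = p * (1 - q) * u := by rw [mul_assoc, hup, mul_assoc]
    _ = p * (p - q) * u := by rw [mul_sub, mul_sub, mul_one, hp.eq]
    _ = p := by rw [mul_assoc, hdu, mul_one]

theorem fg_invertible_case (p q u f g : R) (hp : p * p = p) (hq : q * q = q)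
    (hu1 : (p - q) * u = 1) (hu2 : u * (p - q) = 1)
    (hf : f = p * u) (hg : g = u * p) :
    f * f = f ∧ g * g = g ∧
      rMul f = rMul p ∧ rAnn f = rMul q ∧
      rMul g = rAnn q ∧ rAnn g = rAnn p ∧
      (1 - p) * f = 0 ∧ g * (1 - p) = 0 := by
  have hp' : IsIdempotentElem p := hp
  have hq' : IsIdempotentElem q := hq
  have hpu : p * u = u * (1 - q) :=
    (semiconjBy_symm_of_mul_eq_one hu1 hu2 (semiconjBy_sub_self_one_sub hp' hq')).eq.symm
  have hup : u * p = (1 - q) * u :=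
    (semiconjBy_symm_of_mul_eq_one hu1 hu2 (semiconjBy_sub_one_sub_self hp' hq')).eq
  have hpup : p * u * p = p := mul_mul_eq_self_of_sub_mul_eq_one hp' hu1 hup
  have hu : IsLeftRegular u := isLeftRegular_of_mul_eq_one hu1
  subst hf hg
  refine ⟨isIdempotentElem_mul_right_of_mul_mul_eq_self hpup,
    isIdempotentElem_mul_left_of_mul_mul_eq_self hpup,
    rMul_mul_of_mul_eq_one hu2, ?_, ?_, rAnn_mul_of_isLeftRegular hu, ?_, ?_⟩
  · rw [hpu, rAnn_mul_of_isLeftRegular hu, rAnn_one_sub_of_isIdempotentElem hq']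
  · rw [hup, rMul_mul_of_mul_eq_one hu2, rMul_one_sub_of_isIdempotentElem hq']
  · rw [← mul_assoc, hp'.one_sub_mul_self, zero_mul]
  · rw [mul_assoc, hp'.mul_one_sub_self, mul_zero]
end
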